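/- Let A and B be 8×8 matrices with entries in R, with three-spin tensor components a_{κ,λ,μ} and b_{κ,λ,μ}. Then for all k,l,m ∈ {1,2,3}, the fully entangled rank-three tensor component of the commutator satisfies Tr((σ_k ⊗ σ_l ⊗ σ_m) [A,B]) = (1/8)[ [a_{k,l,m}, b_{0,0,0}] + [a_{k,l,0}, b_{0,0,m}] + [a_{k,0,m}, b_{0,l,0}] + [a_{0,l,m}, b_{k,0,0}] + [a_{k,0,0}, b_{0,l,m}] + [a_{0,0,m}, b_{k,l,0}] + [a_{0,l,0}, b_{k,0,m}] + [a_{0,0,0}, b_{k,l,m}] + i ε_{k k₁ k₂}( {a_{k₁,0,0}, b_{k₂,l,m}} + {a_{k₁,l,0}, b_{k₂,0,m}} + {a_{k₁,0,m}, b_{k₂,l,0}} + {a_{k₁,l,m}, b_{k₂,0,0}} ) + i ε_{l l₁ l₂}( {a_{0,l₁,0}, b_{k,l₂,m}} + {a_{k,l₁,0}, b_{0,l₂,m}} + {a_{0,l₁,m}, b_{k,l₂,0}} + {a_{k,l₁,m}, b_{0,l₂,0}} ) + i ε_{m m₁ m₂}( {a_{0,0,m₁}, b_{k,l,m₂}}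 + {a_{0,l,m₁}, b_{k,0,m₂}} + {a_{k,0,m₁}, b_{0,l,m₂}} + {a_{k,l,m₁}, b_{0,0,m₂}} ) − ε_{k k₁ k₂} ε_{l l₁ l₂}( [a_{k₁,l₁,0}, b_{k₂,l₂,m}] + [a_{k₁,l₁,m}, b_{k₂,l₂,0}] ) − ε_{k k₁ k₂} ε_{m m₁ m₂}( [a_{k₁,0,m₁}, b_{k₂,l,m₂}] + [a_{k₁,l,m₁}, b_{k₂,0,m₂}] ) − ε_{l l₁ l₂} ε_{m m₁ m₂}( [a_{0,l₁,m₁}, b_{k,l₂,m₂}] + [a_{k,l₁,m₁}, b_{0,l₂,m₂}] ) − i ε_{k k₁ k₂} ε_{l l₁ l₂} ε_{m m₁ m₂} {a_{k₁,l₁,m₁}, b_{k₂,l₂,m₂}} ]; i.e., starting from a commutator, the component terms alternate between commutators and anticommutators according to whether the number of Levi-Civita symbols is even or odd. -/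

import Mathlib

open Matrix Kronecker

/-- The Pauli matrices `σ₀ = I₂, σ₁, σ₂, σ₃`, with complex entries regarded as
elements of an associative unital `ℂ`-algebra `R` via the algebra map. -/
noncomputable def pauli (R : Type*) [Ring R] [Algebra ℂ R] : Fin 4 → Matrix (Fin 2) (Fin 2) R
  | 0 => !![1, 0; 0, 1]
  | 1 => !![0, 1; 1, 0]
  | 2 => !![0, -(algebraMap ℂ R Complex.I); algebraMap ℂ R Complex.I, 0]
  | 3 => !![1, 0; 0, -1]

/-- The Levi-Civita symbol `ε_{ijk}` on indices in `{1,2,3}` (represented by `Fin 3`). -/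
def eps (i j k : Fin 3) : ℤ :=
  ((j.val : ℤ) - i.val) * ((k.val : ℤ) - i.val) * ((k.val : ℤ) - j.val) / 2

/-- The structure of a product at one site: `tw k f` collects the component pairs contributing to
the `k`-th Pauli component of a product. -/
noncomputable def tw {M : Type*} [AddCommGroup M] [Module ℂ M] (k : Fin 3)
    (f : Fin 4 → Fin 4 → M) : M :=
  f k.succ 0 + f 0 k.succ
    + Complex.I • (f (k + 1).succ (k + 2).succ - f (k + 2).succ (k + 1).succ)

theorem map_tw {M N : Type*} [AddCommGroup M] [Module ℂ M] [AddCommGroup N] [Module ℂ N]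
    (L : M →ₗ[ℂ] N) (k : Fin 3) (f : Fin 4 → Fin 4 → M) :
    L (tw k f) = tw k (fun x y => L (f x y)) := by
  simp [tw]

theorem eps_sum {R : Type*} [Ring R] (k : Fin 3) (f : Fin 3 → Fin 3 → R) :
    ∑ k₁ : Fin 3, ∑ k₂ : Fin 3, ((eps k k₁ k₂ : ℤ) : R) * f k₁ k₂
      = f (k + 1) (k + 2) - f (k + 2) (k + 1) := by
  fin_cases k <;> simp [Fin.sum_univ_three, eps] <;> abel

/-- Partial trace against a Pauli matrix on the last site. -/
noncomputable def ptr {R : Type*} [Ring R] [Algebra ℂ R] {ι : Type*} (ν : Fin 4)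
    (A : Matrix (ι × Fin 2) (ι × Fin 2) R) : Matrix ι ι R :=
  fun x y => ∑ i, ∑ j, pauli R ν i j * A (x, j) (y, i)

theorem trace_kron {R : Type*} [Ring R] [Algebra ℂ R] {ι : Type*} [Fintype ι] (ν : Fin 4)
    (S : Matrix ι ι R) (A : Matrix (ι × Fin 2) (ι × Fin 2) R) :
    ((S ⊗ₖ pauli R ν) * A).trace = (S * ptr ν A).trace := by
  simp only [Matrix.trace, Matrix.diag, Matrix.mul_apply, Fintype.sum_prod_type, ptr,
    Matrix.kroneckerMap_apply, Finset.mul_sum, mul_assoc]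
  refine Finset.sum_congr rfl fun x _ => ?_
  rw [Finset.sum_comm]

theorem ptr_mul {R : Type*} [Ring R] [Algebra ℂ R] {ι : Type*} [Fintype ι] (m : Fin 3)
    (A B : Matrix (ι × Fin 2) (ι × Fin 2) R) :
    ptr m.succ (A * B) = (1/2 : ℂ) • tw m (fun μ μ₂ => ptr μ A * ptr μ₂ B) := by
  ext x y
  fin_cases m <;>
  · simp [tw, ptr, Matrix.mul_apply, Fintype.sum_prod_type, pauli, ← Algebra.smul_def]
    simp only [← Finset.sum_add_distrib, ← Finset.sum_sub_distrib, Finset.smul_sum,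
      ← Finset.sum_neg_distrib]
    refine Finset.sum_congr rfl fun z _ => ?_
    simp only [mul_add, add_mul, mul_neg, neg_mul, smul_mul_assoc, mul_smul_comm, smul_add,
      smul_neg, smul_sub, smul_smul, Complex.I_mul_I]
    match_scalars <;> ring_nf

theorem trace_mul_one {R : Type*} [Ring R] [Algebra ℂ R] (m : Fin 3)
    (A B : Matrix (Fin 2) (Fin 2) R) :
    (pauli R m.succ * (A * B)).trace
      = (1/2 : ℂ) • tw m (fun μ μ₂ => (pauli R μ * A).trace * (pauli R μ₂ * B).trace) := by
  fin_cases m <;>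
  · simp only [tw, Matrix.trace, Matrix.diag, Matrix.mul_apply, Fin.sum_univ_two]
    simp [pauli, ← Algebra.smul_def]
    simp only [mul_add, add_mul, mul_neg, neg_mul, smul_mul_assoc, mul_smul_comm, smul_add,
      smul_neg, smul_sub, smul_smul, Complex.I_mul_I]
    match_scalars <;> ring_nf

/-- Trace against a fixed matrix as a linear map. -/
noncomputable def trL {R : Type*} [Ring R] [Algebra ℂ R] {ι : Type*} [Fintype ι]
    (S : Matrix ι ι R) : Matrix ι ι R →ₗ[ℂ] R where
  toFun X := (S * X).trace
  map_add' X Y := by simp [mul_add]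
  map_smul' c X := by simp

theorem trace_three {R : Type*} [Ring R] [Algebra ℂ R]
    (A B : Matrix ((Fin 2 × Fin 2) × Fin 2) ((Fin 2 × Fin 2) × Fin 2) R) (k l m : Fin 3) :
    ((pauli R k.succ ⊗ₖ pauli R l.succ ⊗ₖ pauli R m.succ) * (A * B)).trace =
      (1/8 : ℂ) • tw m (fun μ μ₂ => tw l (fun ν ν₂ => tw k (fun κ κ₂ =>
        ((pauli R κ ⊗ₖ pauli R ν ⊗ₖ pauli R μ) * A).trace *
        ((pauli R κ₂ ⊗ₖ pauli R ν₂ ⊗ₖ pauli R μ₂) * B).trace))) := by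
  have key : ∀ {ι : Type} [Fintype ι] (S : Matrix ι ι R)
      (A B : Matrix (ι × Fin 2) (ι × Fin 2) R) (m : Fin 3),
      ((S ⊗ₖ pauli R m.succ) * (A * B)).trace
        = (1/2 : ℂ) • tw m (fun μ μ₂ => (S * (ptr μ A * ptr μ₂ B)).trace) := by
    intro ι _ S A B m
    rw [trace_kron, ptr_mul]
    change trL S _ = _
    rw [map_smul, map_tw]
    rfl
  have tws : ∀ (c : ℂ) (m : Fin 3) (f : Fin 4 → Fin 4 → R),
      tw m (fun x y => c • f x y) = c • tw m f := by
    intro c m f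
    simp only [tw]
    module
  rw [key]
  simp only [key, trace_mul_one, tws, smul_smul, trace_kron]
  norm_num

set_option maxHeartbeats 1000000 in
/-- Fully entangled rank-three tensor component of the commutator of two 8×8 matrices
over a `ℂ`-algebra: starting from a commutator, the component terms alternate between
commutators and anticommutators according to the parity of the number of
Levi-Civita symbols. Here `[x,y] = xy - yx` and `{x,y} = xy + yx`. -/
theorem three_spin_commutator_tensor (R : Type*) [Ring R] [Algebra ℂ R]
    (A B : Matrix ((Fin 2 × Fin 2) × Fin 2) ((Fin 2 × Fin 2) × Fin 2) R)
    (a b : Fin 4 → Fin 4 → Fin 4 → R)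
    (ha : ∀ κ μ ν : Fin 4,
      a κ μ ν = ((pauli R κ ⊗ₖ pauli R μ ⊗ₖ pauli R ν) * A).trace)
    (hb : ∀ κ μ ν : Fin 4,
      b κ μ ν = ((pauli R κ ⊗ₖ pauli R μ ⊗ₖ pauli R ν) * B).trace) :
    ∀ k l m : Fin 3,
      ((pauli R k.succ ⊗ₖ pauli R l.succ ⊗ₖ pauli R m.succ) * (A * B - B * A)).trace =
        (1/8 : ℂ) •
          ((a k.succ l.succ m.succ * b 0 0 0 - b 0 0 0 * a k.succ l.succ m.succ)
            + (a k.succ l.succ 0 * b 0 0 m.succ - b 0 0 m.succ * a k.succ l.succ 0)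
            + (a k.succ 0 m.succ * b 0 l.succ 0 - b 0 l.succ 0 * a k.succ 0 m.succ)
            + (a 0 l.succ m.succ * b k.succ 0 0 - b k.succ 0 0 * a 0 l.succ m.succ)
            + (a k.succ 0 0 * b 0 l.succ m.succ - b 0 l.succ m.succ * a k.succ 0 0)
            + (a 0 0 m.succ * b k.succ l.succ 0 - b k.succ l.succ 0 * a 0 0 m.succ)
            + (a 0 l.succ 0 * b k.succ 0 m.succ - b k.succ 0 m.succ * a 0 l.succ 0)
            + (a 0 0 0 * b k.succ l.succ m.succ - b k.succ l.succ m.succ * a 0 0 0)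
            + algebraMap ℂ R Complex.I *
                ∑ k₁ : Fin 3, ∑ k₂ : Fin 3,
                  ((eps k k₁ k₂ : ℤ) : R) *
                    ((a k₁.succ 0 0 * b k₂.succ l.succ m.succ
                        + b k₂.succ l.succ m.succ * a k₁.succ 0 0)
                      + (a k₁.succ l.succ 0 * b k₂.succ 0 m.succ
                        + b k₂.succ 0 m.succ * a k₁.succ l.succ 0)
                      + (a k₁.succ 0 m.succ * b k₂.succ l.succ 0
                        + b k₂.succ l.succ 0 * a k₁.succ 0 m.succ)
                      + (a k₁.succ l.succ m.succ * b k₂.succ 0 0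
                        + b k₂.succ 0 0 * a k₁.succ l.succ m.succ))
            + algebraMap ℂ R Complex.I *
                ∑ l₁ : Fin 3, ∑ l₂ : Fin 3,
                  ((eps l l₁ l₂ : ℤ) : R) *
                    ((a 0 l₁.succ 0 * b k.succ l₂.succ m.succ
                        + b k.succ l₂.succ m.succ * a 0 l₁.succ 0)
                      + (a k.succ l₁.succ 0 * b 0 l₂.succ m.succ
                        + b 0 l₂.succ m.succ * a k.succ l₁.succ 0)
                      + (a 0 l₁.succ m.succ * b k.succ l₂.succ 0
                        + b k.succ l₂.succ 0 * a 0 l₁.succ m.succ)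
                      + (a k.succ l₁.succ m.succ * b 0 l₂.succ 0
                        + b 0 l₂.succ 0 * a k.succ l₁.succ m.succ))
            + algebraMap ℂ R Complex.I *
                ∑ m₁ : Fin 3, ∑ m₂ : Fin 3,
                  ((eps m m₁ m₂ : ℤ) : R) *
                    ((a 0 0 m₁.succ * b k.succ l.succ m₂.succ
                        + b k.succ l.succ m₂.succ * a 0 0 m₁.succ)
                      + (a 0 l.succ m₁.succ * b k.succ 0 m₂.succ
                        + b k.succ 0 m₂.succ * a 0 l.succ m₁.succ)
                      + (a k.succ 0 m₁.succ * b 0 l.succ m₂.succ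
                        + b 0 l.succ m₂.succ * a k.succ 0 m₁.succ)
                      + (a k.succ l.succ m₁.succ * b 0 0 m₂.succ
                        + b 0 0 m₂.succ * a k.succ l.succ m₁.succ))
            - ∑ k₁ : Fin 3, ∑ k₂ : Fin 3, ∑ l₁ : Fin 3, ∑ l₂ : Fin 3,
                ((eps k k₁ k₂ : ℤ) : R) * ((eps l l₁ l₂ : ℤ) : R) *
                  ((a k₁.succ l₁.succ 0 * b k₂.succ l₂.succ m.succ
                      - b k₂.succ l₂.succ m.succ * a k₁.succ l₁.succ 0)
                    + (a k₁.succ l₁.succ m.succ * b k₂.succ l₂.succ 0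
                      - b k₂.succ l₂.succ 0 * a k₁.succ l₁.succ m.succ))
            - ∑ k₁ : Fin 3, ∑ k₂ : Fin 3, ∑ m₁ : Fin 3, ∑ m₂ : Fin 3,
                ((eps k k₁ k₂ : ℤ) : R) * ((eps m m₁ m₂ : ℤ) : R) *
                  ((a k₁.succ 0 m₁.succ * b k₂.succ l.succ m₂.succ
                      - b k₂.succ l.succ m₂.succ * a k₁.succ 0 m₁.succ)
                    + (a k₁.succ l.succ m₁.succ * b k₂.succ 0 m₂.succ
                      - b k₂.succ 0 m₂.succ * a k₁.succ l.succ m₁.succ))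
            - ∑ l₁ : Fin 3, ∑ l₂ : Fin 3, ∑ m₁ : Fin 3, ∑ m₂ : Fin 3,
                ((eps l l₁ l₂ : ℤ) : R) * ((eps m m₁ m₂ : ℤ) : R) *
                  ((a 0 l₁.succ m₁.succ * b k.succ l₂.succ m₂.succ
                      - b k.succ l₂.succ m₂.succ * a 0 l₁.succ m₁.succ)
                    + (a k.succ l₁.succ m₁.succ * b 0 l₂.succ m₂.succ
                      - b 0 l₂.succ m₂.succ * a k.succ l₁.succ m₁.succ))
            - algebraMap ℂ R Complex.I *
                ∑ k₁ : Fin 3, ∑ k₂ : Fin 3, ∑ l₁ : Fin 3, ∑ l₂ : Fin 3,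
                  ∑ m₁ : Fin 3, ∑ m₂ : Fin 3,
                    ((eps k k₁ k₂ : ℤ) : R) * ((eps l l₁ l₂ : ℤ) : R)
                      * ((eps m m₁ m₂ : ℤ) : R) *
                      (a k₁.succ l₁.succ m₁.succ * b k₂.succ l₂.succ m₂.succ
                        + b k₂.succ l₂.succ m₂.succ * a k₁.succ l₁.succ m₁.succ)) := by
  intro k l m
  have hI : ∀ x : R, algebraMap ℂ R Complex.I * x = Complex.I • x := fun x =>
    (Algebra.smul_def _ _).symm
  rw [mul_sub, Matrix.trace_sub, trace_three, trace_three]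
  simp only [← ha, ← hb, ← smul_sub]
  congr 1
  simp only [mul_assoc, ← Finset.mul_sum, eps_sum, hI]
  simp only [tw, smul_add, smul_sub, smul_smul, Complex.I_mul_I, neg_smul, one_smul]
  clear ha hb
  generalize (k + 1).succ = k₁, (k + 2).succ = k₂, (l + 1).succ = l₁, (l + 2).succ = l₂,
    (m + 1).succ = m₁, (m + 2).succ = m₂, k.succ = k₀, l.succ = l₀, m.succ = m₀
  obtain ⟨p, hp⟩ : ∃ p : Fin 4 → Fin 4 → Fin 4 → Fin 4 → Fin 4 → Fin 4 → R,
      ∀ x y z u v w, a x y z * b u v w = p x y z u v w :=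
    ⟨_, fun _ _ _ _ _ _ => rfl⟩
  obtain ⟨q, hq⟩ : ∃ q : Fin 4 → Fin 4 → Fin 4 → Fin 4 → Fin 4 → Fin 4 → R,
      ∀ x y z u v w, b x y z * a u v w = q x y z u v w :=
    ⟨_, fun _ _ _ _ _ _ => rfl⟩
  obtain ⟨P, hP⟩ : ∃ P : Fin 4 → Fin 4 → Fin 4 → Fin 4 → Fin 4 → Fin 4 → R,
      ∀ x y z u v w, Complex.I • p x y z u v w = P x y z u v w :=
    ⟨_, fun _ _ _ _ _ _ => rfl⟩
  obtain ⟨Q, hQ⟩ : ∃ Q : Fin 4 → Fin 4 → Fin 4 → Fin 4 → Fin 4 → Fin 4 → R,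
      ∀ x y z u v w, Complex.I • q x y z u v w = Q x y z u v w :=
    ⟨_, fun _ _ _ _ _ _ => rfl⟩
  simp only [hp, hq, hP, hQ, smul_neg]
  clear hp hq hP hQ hI A B a b
  abel
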